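/- The group G_BH has order 3840, and its center consists exactly of the two scalar matrices Id and -Id. -/

import Mathlib

open Matrix Complex

/-- The generator `t = diag(-1,1,1,1,1,1)` of the Brandhorst–Hashimoto group. -/
def tBH : Matrix (Fin 6) (Fin 6) ℂ :=
  !![-1,0,0,0,0,0; 0,1,0,0,0,0; 0,0,1,0,0,0; 0,0,0,1,0,0; 0,0,0,0,1,0; 0,0,0,0,0,1]

/-- The generator `u` of the Brandhorst–Hashimoto group. -/
noncomputable def uBH : Matrix (Fin 6) (Fin 6) ℂ :=
  !![I,0,0,0,0,0; 0,0,1,0,0,0; 0,1,0,0,0,0; 0,0,0,-I,0,0; 0,0,0,0,0,1; 0,0,0,0,1,0]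

/-- The generator `v` (a permutation matrix) of the Brandhorst–Hashimoto group. -/
def vBH : Matrix (Fin 6) (Fin 6) ℂ :=
  !![0,0,0,0,0,1; 1,0,0,0,0,0; 0,1,0,0,0,0; 0,0,1,0,0,0; 0,0,0,0,1,0; 0,0,0,1,0,0]

/-- The Brandhorst–Hashimoto group `G_BH`: the subgroup of `GL(6,ℂ)` generated by
`t`, `u` and `v`. -/
noncomputable def GBH : Subgroup (GL (Fin 6) ℂ) :=
  Subgroup.closure
    {g | (↑g : Matrix (Fin 6) (Fin 6) ℂ) ∈ ({tBH, uBH, vBH} : Set (Matrix (Fin 6) (Fin 6) ℂ))}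

namespace BHaux

/-- Monomial matrix data: column `j` has the single entry `I ^ (e j)` in row `f j`. -/
abbrev T := (Fin 6 → Fin 6) × (Fin 6 → ℕ)

/-- The monomial matrix attached to such data. -/
noncomputable def M (a : T) : Matrix (Fin 6) (Fin 6) ℂ :=
  Matrix.of fun i j => if i = a.1 j then I ^ (a.2 j) else 0

def mulT (a b : T) : T := (fun j => a.1 (b.1 j), fun j => b.2 j + a.2 (b.1 j))

def oneT : T := (fun j => j, fun _ => 0)

lemma M_mul (a b : T) : M a * M b = M (mulT a b) := by
  ext i j
  simp only [M, mulT, Matrix.mul_apply, Matrix.of_apply]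
  rw [Finset.sum_eq_single (b.1 j)]
  · simp only [if_true, pow_add, ite_mul, zero_mul]
    split_ifs
    · ring
    · rfl
  · intro k _ hk
    simp [hk]
  · simp

lemma M_one : M oneT = 1 := by
  ext i j
  simp [M, oneT, Matrix.one_apply]

lemma I_pow_eq_iff (m n : ℕ) : (I : ℂ) ^ m = I ^ n ↔ m % 4 = n % 4 := by
  rw [Complex.I_pow_eq_pow_mod m, Complex.I_pow_eq_pow_mod n]
  constructor
  · exact fun h => Complex.isPrimitiveRoot_I.pow_inj (Nat.mod_lt _ (by norm_num))
      (Nat.mod_lt _ (by norm_num)) h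
  · exact fun h => by rw [h]

lemma M_eq_iff (a b : T) : M a = M b ↔ ∀ j, a.1 j = b.1 j ∧ a.2 j % 4 = b.2 j % 4 := by
  constructor
  · intro h j
    have h1 := congrFun (congrFun h (a.1 j)) j
    simp only [M, Matrix.of_apply, if_true] at h1
    have hf : a.1 j = b.1 j := by
      by_contra hne
      rw [if_neg hne] at h1
      exact pow_ne_zero _ I_ne_zero h1
    rw [if_pos hf] at h1
    exact ⟨hf, (I_pow_eq_iff _ _).1 h1⟩
  · intro h
    ext i j
    simp only [M, Matrix.of_apply, (h j).1, (I_pow_eq_iff _ _).2 (h j).2]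

/-- The three generators. -/
def gen (i : Fin 3) : T :=
  match i with
  | 0 => (fun j => j, ![2, 0, 0, 0, 0, 0])
  | 1 => (![0, 2, 1, 3, 5, 4], ![1, 0, 0, 3, 0, 0])
  | 2 => (![1, 2, 3, 5, 4, 0], fun _ => 0)

lemma M_gen0 : M (gen 0) = tBH := by
  ext i j
  fin_cases i <;> fin_cases j <;> simp [M, gen, tBH]

lemma M_gen1 : M (gen 1) = uBH := by
  ext i j
  fin_cases i <;> fin_cases j <;> simp [M, gen, uBH]

lemma M_gen2 : M (gen 2) = vBH := by
  ext i j
  fin_cases i <;> fin_cases j <;> simp [M, gen, vBH]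

def ev : List (Fin 3) → T
  | [] => oneT
  | i :: w => mulT (gen i) (ev w)

/-- Words representing the 60 elements of the quotient by the sign matrices. -/
def words : List (List (Fin 3)) :=
  [[], [1], [2], [2, 1], [1, 2],
   [2, 2], [1, 2, 1], [2, 2, 1], [2, 1, 2], [1, 2, 2],
   [2, 2, 2], [2, 1, 2, 1], [1, 2, 2, 1], [2, 2, 2, 1], [1, 2, 1, 2],
   [2, 2, 1, 2], [2, 1, 2, 2], [1, 2, 2, 2], [2, 2, 2, 2], [1, 2, 1, 2, 1],
   [2, 2, 1, 2, 1], [2, 1, 2, 2, 1], [1, 2, 2, 2, 1], [2, 2, 2, 2, 1], [2, 1, 2, 1, 2],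
   [1, 2, 2, 1, 2], [2, 2, 2, 1, 2], [1, 2, 1, 2, 2], [2, 1, 2, 2, 2], [1, 2, 2, 2, 2],
   [2, 1, 2, 1, 2, 1], [1, 2, 2, 1, 2, 1], [2, 2, 2, 1, 2, 1], [1, 2, 1, 2, 2, 1], [2, 1, 2, 2, 2, 1],
   [1, 2, 2, 2, 2, 1], [1, 2, 1, 2, 1, 2], [2, 2, 1, 2, 1, 2], [2, 1, 2, 2, 1, 2], [1, 2, 2, 2, 1, 2],
   [2, 2, 2, 2, 1, 2], [2, 1, 2, 1, 2, 2], [1, 2, 1, 2, 2, 2], [2, 1, 2, 2, 2, 2], [2, 2, 1, 2, 1, 2, 1],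
   [1, 2, 2, 2, 1, 2, 1], [2, 2, 2, 2, 1, 2, 1], [2, 1, 2, 1, 2, 2, 1], [1, 2, 1, 2, 2, 2, 1], [2, 1, 2, 2, 2, 2, 1],
   [1, 2, 2, 1, 2, 1, 2], [1, 2, 2, 2, 2, 1, 2], [1, 2, 1, 2, 1, 2, 2], [1, 2, 1, 2, 2, 2, 2], [1, 2, 2, 1, 2, 1, 2, 1],
   [1, 2, 2, 2, 2, 1, 2, 1], [1, 2, 1, 2, 1, 2, 2, 1], [1, 2, 1, 2, 2, 2, 2, 1], [2, 1, 2, 2, 2, 2, 1, 2], [2, 1, 2, 2, 2, 2, 1, 2, 1]]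

/-- Words for the six elementary sign matrices. -/
def dwords : List (List (Fin 3)) :=
  [[0], [2, 0, 2, 2, 2, 2], [2, 2, 0, 2, 2, 2], [1, 1, 0], [1, 2, 2, 2, 0, 2, 0, 2, 1, 0], [2, 2, 2, 2, 0, 2]]

def R (k : Fin 60) : T := ev (words.get k)

lemma R_closed : ∀ i : Fin 3, ∀ k : Fin 60, ∃ l : Fin 60, ∀ j : Fin 6,
    (R l).1 j = (mulT (gen i) (R k)).1 j ∧
      (R l).2 j % 2 = (mulT (gen i) (R k)).2 j % 2 := by
  decide +kernel

lemma R_inj : ∀ k l : Fin 60, (∀ j, (R k).1 j = (R l).1 j) → k = l := by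
  decide +kernel

lemma R_id : ∀ k : Fin 60, (∀ j, (R k).1 j = j) → k = 0 := by
  decide +kernel

lemma R_zero : ∀ j, (R 0).1 j = j ∧ (R 0).2 j = 0 := by
  decide +kernel

lemma dwords_spec : ∀ i : Fin 6, ∀ j, (ev (dwords.get i)).1 j = j ∧
    (ev (dwords.get i)).2 j % 4 = (if j = i then 2 else 0) % 4 := by
  decide +kernel

lemma gen_pow : ∀ i : Fin 3, ∀ j, (ev (List.replicate 20 i)).1 j = (oneT).1 j ∧
    (ev (List.replicate 20 i)).2 j % 4 = (oneT).2 j % 4 := by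
  decide +kernel

lemma M_ev_replicate (i : Fin 3) (n : ℕ) : M (ev (List.replicate n i)) = M (gen i) ^ n := by
  induction n with
  | zero => simp [ev, M_one]
  | succ n ih => rw [List.replicate_succ, ev, ← M_mul, ih, pow_succ']

lemma M_gen_pow (i : Fin 3) : M (gen i) ^ 20 = 1 := by
  rw [← M_ev_replicate, ← M_one, M_eq_iff]
  exact gen_pow i

/-- The general element. -/
def E (p : Fin 60 × (Fin 6 → Fin 2)) : T := ((R p.1).1, fun j => (R p.1).2 j + 2 * (p.2 j : ℕ))

lemma E_inj (p q : Fin 60 × (Fin 6 → Fin 2)) (h : M (E p) = M (E q)) : p = q := by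
  rw [M_eq_iff] at h
  obtain ⟨k, s⟩ := p
  obtain ⟨l, r⟩ := q
  have hk : k = l := R_inj k l fun j => (h j).1
  subst hk
  congr 1
  funext j
  have := (h j).2
  simp only [E] at this
  have h1 := (s j).isLt
  have h2 := (r j).isLt
  apply Fin.ext
  omega

lemma E_step (i : Fin 3) (p : Fin 60 × (Fin 6 → Fin 2)) :
    ∃ q, M (gen i) * M (E p) = M (E q) := by
  obtain ⟨k, s⟩ := p
  obtain ⟨l, hl⟩ := R_closed i k
  refine ⟨(l, fun j => ⟨(((mulT (gen i) (E (k, s))).2 j + 3 * (R l).2 j) % 4) / 2, by omega⟩), ?_⟩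
  rw [M_mul, M_eq_iff]
  intro j
  obtain ⟨h1, h2⟩ := hl j
  refine ⟨h1.symm, ?_⟩
  simp only [E, mulT] at h2 ⊢
  omega

/-- The generators as elements of `GL`. -/
noncomputable def gg (i : Fin 3) : GL (Fin 6) ℂ where
  val := M (gen i)
  inv := M (gen i) ^ 19
  val_inv := by rw [← pow_succ', M_gen_pow]
  inv_val := by rw [← pow_succ, M_gen_pow]

lemma gg_mem (i : Fin 3) : gg i ∈ GBH := by
  apply Subgroup.subset_closure
  change M (gen i) ∈ ({tBH, uBH, vBH} : Set (Matrix (Fin 6) (Fin 6) ℂ))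
  fin_cases i
  · exact Or.inl M_gen0
  · exact Or.inr (Or.inl M_gen1)
  · exact Or.inr (Or.inr M_gen2)

lemma exists_gen {x : GL (Fin 6) ℂ}
    (hx : (x : Matrix (Fin 6) (Fin 6) ℂ) ∈
      ({tBH, uBH, vBH} : Set (Matrix (Fin 6) (Fin 6) ℂ))) :
    ∃ i, (x : Matrix (Fin 6) (Fin 6) ℂ) = M (gen i) := by
  rcases hx with h | h | h
  · exact ⟨0, h.trans M_gen0.symm⟩
  · exact ⟨1, h.trans M_gen1.symm⟩
  · exact ⟨2, Eq.trans h M_gen2.symm⟩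

lemma E_pow (i : Fin 3) (n : ℕ) (p : Fin 60 × (Fin 6 → Fin 2)) :
    ∃ q, M (gen i) ^ n * M (E p) = M (E q) := by
  induction n with
  | zero => exact ⟨p, by simp⟩
  | succ n ih =>
    obtain ⟨q, hq⟩ := ih
    obtain ⟨r, hr⟩ := E_step i q
    exact ⟨r, by rw [pow_succ', mul_assoc, hq, hr]⟩

lemma exists_E {x : GL (Fin 6) ℂ} (hx : x ∈ GBH) :
    ∃ p, (x : Matrix (Fin 6) (Fin 6) ℂ) = M (E p) := by
  unfold GBH at hx
  induction hx using Subgroup.closure_induction_left with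
  | one =>
    refine ⟨(0, fun _ => 0), ?_⟩
    rw [Units.val_one, ← M_one, M_eq_iff]
    intro j
    simp [E, oneT, R_zero j]
  | mul_left x hx y hy ih =>
    obtain ⟨i, hi⟩ := exists_gen hx
    obtain ⟨p, hp⟩ := ih
    rw [Units.val_mul, hi, hp]
    exact E_step i p
  | inv_mul_cancel x hx y hy ih =>
    obtain ⟨i, hi⟩ := exists_gen hx
    obtain ⟨p, hp⟩ := ih
    have h1 : x = gg i := Units.ext hi
    rw [Units.val_mul, hp, h1]
    exact E_pow i 19 p

/-- A matrix lying in the group. -/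
def Q (A : Matrix (Fin 6) (Fin 6) ℂ) : Prop :=
  ∃ g ∈ GBH, (g : Matrix (Fin 6) (Fin 6) ℂ) = A

lemma Q_mul {A B : Matrix (Fin 6) (Fin 6) ℂ} (hA : Q A) (hB : Q B) : Q (A * B) := by
  obtain ⟨g, hg, rfl⟩ := hA
  obtain ⟨h, hh, rfl⟩ := hB
  exact ⟨g * h, mul_mem hg hh, rfl⟩

lemma Q_one : Q 1 := ⟨1, one_mem _, rfl⟩

lemma Q_ev (w : List (Fin 3)) : Q (M (ev w)) := by
  induction w with
  | nil => rw [ev, M_one]; exact Q_one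
  | cons i w ih =>
    rw [ev, ← M_mul]
    exact Q_mul ⟨gg i, gg_mem i, rfl⟩ ih

def dT (i : Fin 6) (n : ℕ) : T := (fun j => j, fun j => if j = i then 2 * n else 0)

lemma Q_d1 (i : Fin 6) : Q (M (dT i 1)) := by
  have h : M (ev (dwords.get i)) = M (dT i 1) := (M_eq_iff _ _).2 (dwords_spec i)
  rw [← h]
  exact Q_ev _

lemma Q_d (i : Fin 6) (n : ℕ) : Q (M (dT i n)) := by
  induction n with
  | zero =>
    have h : M (dT i 0) = 1 := by
      rw [← M_one, M_eq_iff]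
      intro j
      simp [dT, oneT]
    rw [h]
    exact Q_one
  | succ n ih =>
    have h : M (dT i (n + 1)) = M (dT i n) * M (dT i 1) := by
      rw [M_mul, M_eq_iff]
      intro j
      refine ⟨rfl, ?_⟩
      simp only [dT, mulT]
      split_ifs <;> omega
    rw [h]
    exact Q_mul ih (Q_d1 i)

lemma Q_diag (s : Fin 6 → ℕ) : Q (M (fun j => j, fun j => 2 * s j)) := by
  have h : M (fun j => j, fun j => 2 * s j) =
      M (dT 0 (s 0)) * (M (dT 1 (s 1)) * (M (dT 2 (s 2)) * (M (dT 3 (s 3)) *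
        (M (dT 4 (s 4)) * M (dT 5 (s 5)))))) := by
    simp only [M_mul]
    rw [M_eq_iff]
    intro j
    refine ⟨rfl, ?_⟩
    simp only [dT, mulT]
    fin_cases j <;> simp
  rw [h]
  exact Q_mul (Q_d _ _) (Q_mul (Q_d _ _) (Q_mul (Q_d _ _) (Q_mul (Q_d _ _)
    (Q_mul (Q_d _ _) (Q_d _ _)))))

lemma Q_E (p : Fin 60 × (Fin 6 → Fin 2)) : Q (M (E p)) := by
  have h : M (E p) = M (R p.1) * M (fun j => j, fun j => 2 * (p.2 j : ℕ)) := by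
    rw [M_mul, M_eq_iff]
    intro j
    refine ⟨rfl, ?_⟩
    simp only [E, mulT]
    omega
  rw [h]
  exact Q_mul (Q_ev _) (Q_diag _)

lemma card_GBH : Nat.card GBH = 3840 := by
  choose F hF hFE using Q_E
  have hb : Function.Bijective (fun p => (⟨F p, hF p⟩ : GBH)) := by
    constructor
    · intro p q h
      have h1 : F p = F q := congrArg Subtype.val h
      apply E_inj
      rw [← hFE p, ← hFE q, h1]
    · rintro ⟨g, hg⟩
      obtain ⟨p, hp⟩ := exists_E hg
      exact ⟨p, Subtype.ext (Units.ext ((hFE p).trans hp.symm))⟩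
  rw [← Nat.card_congr (Equiv.ofBijective _ hb)]
  simp

lemma neg_one_eq : M (fun j => j, fun _ => 2) = -1 := by
  ext i j
  by_cases h : i = j <;> simp [M, h]

lemma commute_Q {g : GL (Fin 6) ℂ} (hg : ∀ h ∈ GBH, g * h = h * g)
    {A : Matrix (Fin 6) (Fin 6) ℂ} (hA : Q A) :
    (g : Matrix (Fin 6) (Fin 6) ℂ) * A = A * (g : Matrix (Fin 6) (Fin 6) ℂ) := by
  obtain ⟨h, hh, rfl⟩ := hA
  exact congrArg Units.val (hg h hh)

lemma center_sub {g : GL (Fin 6) ℂ} (hg : g ∈ GBH) (hc : ∀ h ∈ GBH, g * h = h * g) :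
    (g : Matrix (Fin 6) (Fin 6) ℂ) = 1 ∨ (g : Matrix (Fin 6) (Fin 6) ℂ) = -1 := by
  obtain ⟨⟨k, s⟩, hp⟩ := exists_E hg
  have hk : k = 0 := by
    apply R_id
    intro j
    have h := commute_Q hc (Q_d1 j)
    rw [hp, M_mul, M_mul, M_eq_iff] at h
    have h2 := (h j).2
    simp only [mulT, E, dT, if_true] at h2
    by_contra hne
    rw [if_neg hne] at h2
    omega
  subst hk
  have key : ∀ i j, (s j : ℕ) = s ((gen i).1 j) := by
    intro i j
    have h := commute_Q hc ⟨gg i, gg_mem i, rfl⟩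
    change _ * M (gen i) = M (gen i) * _ at h
    rw [hp, M_mul, M_mul, M_eq_iff] at h
    have h2 := (h j).2
    simp only [mulT, E, (R_zero _).1, (R_zero _).2] at h2
    have h3 := (s j).isLt
    have h4 := (s ((gen i).1 j)).isLt
    omega
  have a0 : (s 0 : ℕ) = s 1 := key 2 0
  have a1 : (s 1 : ℕ) = s 2 := key 2 1
  have a2 : (s 2 : ℕ) = s 3 := key 2 2
  have a3 : (s 3 : ℕ) = s 5 := key 2 3
  have a4 : (s 4 : ℕ) = s 5 := key 1 4
  have hs : ∀ j, (s j : ℕ) = s 0 := by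
    intro j
    fin_cases j <;> simp only [Fin.zero_eta, Fin.mk_one, Fin.reduceFinMk] <;> omega
  have h0 := (s 0).isLt
  rcases (by omega : (s 0 : ℕ) = 0 ∨ (s 0 : ℕ) = 1) with h | h
  · left
    rw [hp, ← M_one, M_eq_iff]
    intro j
    simp [E, oneT, R_zero j, hs j, h]
  · right
    rw [hp, ← neg_one_eq, M_eq_iff]
    intro j
    simp [E, R_zero j, hs j, h]

end BHaux

/-- `G_BH` has order `3840` and its center consists exactly of `Id` and `-Id`. -/
theorem stmt_17 :
    Nat.card GBH = 3840 ∧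
    {g : GL (Fin 6) ℂ | g ∈ GBH ∧ ∀ h ∈ GBH, g * h = h * g} =
      {g : GL (Fin 6) ℂ |
        (↑g : Matrix (Fin 6) (Fin 6) ℂ) = 1 ∨ (↑g : Matrix (Fin 6) (Fin 6) ℂ) = -1} := by
  refine ⟨BHaux.card_GBH, ?_⟩
  ext g
  simp only [Set.mem_ofPred_eq]
  constructor
  · rintro ⟨hg, hc⟩
    exact BHaux.center_sub hg hc
  · rintro (h | h)
    · have h1 : g = 1 := Units.ext h
      subst h1
      exact ⟨one_mem _, fun h _ => by simp⟩
    · constructor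
      · obtain ⟨g', hg', e⟩ := BHaux.Q_diag (fun _ => 1)
        have h1 : g = g' := Units.ext (h.trans (BHaux.neg_one_eq.symm.trans e.symm))
        rw [h1]
        exact hg'
      · intro x _
        apply Units.ext
        rw [Units.val_mul, Units.val_mul, h]
        simp
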